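/- arXiv:cs/0203025 — 3 statements merged into one kernel-verified Lean document; each statement's English description precedes it below -/
import Mathlib

section
/- Let P be a convex subset of ℝ³, O a point, and R ≥ 1 a real number such that the closed ball of radius 1 centered at O is contained in P and P is contained in the closed ball of radius R centered at O. If A and B are points with the closed segment [A,B] contained in the topological frontier of P, then the distance between A and B is at most 2·√(R² − 1). -/
open Metric

/-- Edge-length bound for a `(1,R)`-fat convex body: if `closedBall O 1 ⊆ P ⊆ closedBall O R`
with `P` convex, then any segment contained in the frontier of `P` has length at most
`2 * √(R² - 1)`. -/
theorem segment_in_frontier_length_le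
    (P : Set (EuclideanSpace ℝ (Fin 3))) (O : EuclideanSpace ℝ (Fin 3)) (R : ℝ)
    (hR : 1 ≤ R) (hconv : Convex ℝ P)
    (hin : closedBall O 1 ⊆ P) (hout : P ⊆ closedBall O R)
    (A B : EuclideanSpace ℝ (Fin 3))
    (hseg : segment ℝ A B ⊆ frontier P) :
    dist A B ≤ 2 * Real.sqrt (R ^ 2 - 1) := by
  have hcl : ∀ X ∈ frontier P, ‖X - O‖ ≤ R := by
    intro X hX
    have h := closure_minimal hout isClosed_closedBall (frontier_subset_closure hX)
    rwa [mem_closedBall, dist_eq_norm] at h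
  have hA := hcl A (hseg (left_mem_segment ℝ A B))
  have hB := hcl B (hseg (right_mem_segment ℝ A B))
  have hM : 1 ≤ ‖midpoint ℝ A B - O‖ := by
    by_contra! h
    have hf := hseg (midpoint_mem_segment (𝕜 := ℝ) A B)
    refine hf.2 (interior_maximal (ball_subset_closedBall.trans hin) isOpen_ball ?_)
    rwa [mem_ball, dist_eq_norm]
  have hsum : (A - O) + (B - O) = (2 : ℝ) • (midpoint ℝ A B - O) := by
    rw [midpoint_eq_smul_add]
    simp only [invOf_eq_inv]
    module
  have hdiff : (A - O) - (B - O) = A - B := by abel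
  have hp := parallelogram_law_with_norm ℝ (A - O) (B - O)
  rw [hsum, hdiff, norm_smul, Real.norm_ofNat] at hp
  rw [dist_eq_norm]
  have hle : ‖A - B‖ / 2 ≤ Real.sqrt (R ^ 2 - 1) := by
    apply Real.le_sqrt_of_sq_le
    have := mul_self_le_mul_self (norm_nonneg _) hA
    have := mul_self_le_mul_self (norm_nonneg _) hB
    have := mul_self_le_mul_self zero_le_one hM
    nlinarith
  linarith
end

section
/- Let I be a finite index set, and for each i ∈ I let μᵢ ∈ ℝ² be nonzero and cᵢ ∈ ℝ. Suppose that (a) the feasible region {x ∈ ℝ² : ∀i, ⟨μᵢ, x⟩ ≤ cᵢ} is nonempty; (b) there are no two distinct indices i, j and real t > 0 with μᵢ = −t·μⱼ (no two normals are antiparallel); and (c) there are no three pairwise distinct indices i, j, k and point p ∈ ℝ² with ⟨μᵢ, p⟩ = cᵢ, ⟨μⱼ, p⟩ = cⱼ, and ⟨μₖ, p⟩ = cₖ (no three bounding lines are concurrent). Then there exists x ∈ ℝ² with ⟨μᵢ, x⟩ < cᵢ for all i; that is, the feasible region has nonempty interior. -/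
open scoped RealInnerProductSpace

/-- A nonempty intersection of half-planes in ℝ² with nonzero normals, no two antiparallel
normals, and no three concurrent bounding lines, has nonempty interior: there is a point
strictly satisfying all constraints. -/
theorem feasible_region_has_interior_point
    (I : Type*) [Fintype I] (μ : I → EuclideanSpace ℝ (Fin 2)) (c : I → ℝ)
    (hμ : ∀ i, μ i ≠ 0)
    (hfeas : ∃ x : EuclideanSpace ℝ (Fin 2), ∀ i, ⟪μ i, x⟫ ≤ c i)
    (hpar : ¬∃ (i j : I) (t : ℝ), i ≠ j ∧ 0 < t ∧ μ i = -t • μ j)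
    (hconc : ¬∃ (i j k : I) (p : EuclideanSpace ℝ (Fin 2)),
        i ≠ j ∧ j ≠ k ∧ i ≠ k ∧ ⟪μ i, p⟫ = c i ∧ ⟪μ j, p⟫ = c j ∧ ⟪μ k, p⟫ = c k) :
    ∃ x : EuclideanSpace ℝ (Fin 2), ∀ i, ⟪μ i, x⟫ < c i := by
  obtain ⟨x, hx⟩ := hfeas
  -- it suffices to find a direction decreasing every active constraint
  suffices hd : ∃ d : EuclideanSpace ℝ (Fin 2), ∀ i, ⟪μ i, x⟫ = c i → ⟪μ i, d⟫ < 0 by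
    obtain ⟨d, hd⟩ := hd
    have hev : ∀ᶠ ε in nhdsWithin (0 : ℝ) (Set.Ioi 0), ∀ i, ⟪μ i, x + ε • d⟫ < c i := by
      rw [Filter.eventually_all]
      intro i
      rcases (hx i).lt_or_eq with h | h
      · have hc : ContinuousAt (fun ε : ℝ => ⟪μ i, x + ε • d⟫) 0 := by fun_prop
        have h2 : ∀ᶠ ε in nhds (0 : ℝ), ⟪μ i, x + ε • d⟫ < c i :=
          hc.eventually_lt continuousAt_const (by simpa using h)
        exact h2.filter_mono nhdsWithin_le_nhds
      · filter_upwards [self_mem_nhdsWithin] with ε hε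
        have hε' : 0 < ε := hε
        rw [inner_add_right, inner_smul_right, h]
        have := mul_neg_of_pos_of_neg hε' (hd i h)
        linarith
    obtain ⟨ε, hε⟩ := hev.exists
    exact ⟨x + ε • d, hε⟩
  by_cases h0 : ∃ a, ⟪μ a, x⟫ = c a
  swap
  · exact ⟨0, fun i hi => absurd ⟨i, hi⟩ h0⟩
  obtain ⟨a, ha⟩ := h0
  by_cases h1 : ∃ b, a ≠ b ∧ ⟪μ b, x⟫ = c b
  swap
  · refine ⟨-μ a, fun i hi => ?_⟩
    have hia : a = i := by
      by_contra hne
      exact h1 ⟨i, hne, hi⟩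
    subst hia
    rw [inner_neg_right]
    have := real_inner_self_pos.mpr (hμ a)
    linarith
  obtain ⟨b, hab, hb⟩ := h1
  have hna : 0 < ‖μ a‖ := norm_pos_iff.mpr (hμ a)
  have hnb : 0 < ‖μ b‖ := norm_pos_iff.mpr (hμ b)
  have key : 0 < ‖μ a‖ * ‖μ b‖ + ⟪μ a, μ b⟫ := by
    have hle := neg_le_of_abs_le (abs_real_inner_le_norm (μ a) (μ b))
    rcases hle.lt_or_eq with h | h
    · linarith
    · exfalso
      have h2 : ⟪μ a, -μ b⟫ = ‖μ a‖ * ‖-μ b‖ := by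
        rw [inner_neg_right, norm_neg]; linarith
      rw [inner_eq_norm_mul_iff_real, norm_neg] at h2
      refine hpar ⟨a, b, ‖μ a‖ / ‖μ b‖, hab, div_pos hna hnb, ?_⟩
      have h3 : μ a = ‖μ b‖⁻¹ • (‖μ b‖ • μ a) := by
        rw [smul_smul, inv_mul_cancel₀ hnb.ne', one_smul]
      refine h3.trans ?_
      rw [h2, smul_smul, smul_neg, ← neg_smul, div_eq_inv_mul]
  refine ⟨-(‖μ b‖ • μ a + ‖μ a‖ • μ b), fun i hi => ?_⟩
  rw [inner_neg_right, inner_add_right, inner_smul_right, inner_smul_right]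
  by_cases hia : i = a
  · subst hia
    rw [real_inner_self_eq_norm_sq]
    nlinarith [mul_pos hna key]
  by_cases hib : i = b
  · subst hib
    rw [real_inner_self_eq_norm_sq, real_inner_comm]
    nlinarith [mul_pos hnb key]
  exact absurd ⟨i, a, b, x, hia, hab, hib, hi, ha, hb⟩ hconc
end

section
/- Let C be a compact convex subset of ℝ² containing the closed unit disk centered at the origin, and let v ∈ ℝ² be nonzero. Then the 1-dimensional Hausdorff measure of the set {x ∈ frontier C : there exists n ∈ ℝ² with ⟨n, v⟩ > 0 and ⟨n, y − x⟩ ≤ 0 for all y ∈ C} is at least 2. -/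
open Metric MeasureTheory
open scoped RealInnerProductSpace ENNReal

theorem exists_unit_orthogonal (v : EuclideanSpace ℝ (Fin 2)) (hv : v ≠ 0) :
    ∃ w : EuclideanSpace ℝ (Fin 2), ‖w‖ = 1 ∧ ⟪w, v⟫ = 0 := by
  set u : EuclideanSpace ℝ (Fin 2) := !₂[-v 1, v 0] with hu
  have hu0 : u ≠ 0 := by
    intro h
    apply hv
    have h0 : u 0 = 0 := by rw [h]; rfl
    have h1 : u 1 = 0 := by rw [h]; rfl
    ext i
    fin_cases i
    · simpa [hu] using h1
    · simpa [hu] using h0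
  refine ⟨‖u‖⁻¹ • u, ?_, ?_⟩
  · rw [norm_smul, norm_inv, norm_norm, inv_mul_cancel₀ (norm_ne_zero_iff.2 hu0)]
  · rw [real_inner_smul_left]
    have : ⟪u, v⟫ = 0 := by
      simp [hu, PiLp.inner_apply, Fin.sum_univ_two]
      ring
    rw [this, mul_zero]

/-- The chain argument: for a compact convex set `C ⊆ ℝ²` containing the closed unit disk
and any nonzero direction `v`, the part of the boundary of `C` admitting an outward normal
`n` with `⟪n, v⟫ > 0` has 1-dimensional Hausdorff measure at least `2`. -/
theorem boundary_chain_length_ge_two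
    (C : Set (EuclideanSpace ℝ (Fin 2))) (hC : IsCompact C) (hconv : Convex ℝ C)
    (hdisk : closedBall 0 1 ⊆ C)
    (v : EuclideanSpace ℝ (Fin 2)) (hv : v ≠ 0) :
    (2 : ℝ≥0∞) ≤
      μH[1] {x ∈ frontier C | ∃ n : EuclideanSpace ℝ (Fin 2),
        0 < ⟪n, v⟫ ∧ ∀ y ∈ C, ⟪n, y - x⟫ ≤ 0} := by
  obtain ⟨w, hw, hwv⟩ := exists_unit_orthogonal v hv
  set S := {x ∈ frontier C | ∃ n : EuclideanSpace ℝ (Fin 2),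
        0 < ⟪n, v⟫ ∧ ∀ y ∈ C, ⟪n, y - x⟫ ≤ 0} with hS
  have hvpos : 0 < ‖v‖ := norm_pos_iff.2 hv
  have hball : ball (0 : EuclideanSpace ℝ (Fin 2)) 1 ⊆ interior C :=
    interior_maximal (ball_subset_closedBall.trans hdisk) isOpen_ball
  have hlip : LipschitzWith 1 (fun x : EuclideanSpace ℝ (Fin 2) => ⟪w, x⟫) := by
    apply LipschitzWith.of_dist_le_mul
    intro x y
    rw [Real.dist_eq, ← inner_sub_right, dist_eq_norm]
    simpa [hw] using abs_real_inner_le_norm w (x - y)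
  have key : Set.Ioo (-1 : ℝ) 1 ⊆ (fun x : EuclideanSpace ℝ (Fin 2) => ⟪w, x⟫) '' S := by
    intro t ht
    have hcont : Continuous (fun s : ℝ => t • w + s • v) := by fun_prop
    have htw : t • w ∈ interior C := by
      apply hball
      rw [mem_ball_zero_iff, norm_smul, hw, mul_one, Real.norm_eq_abs, abs_lt]
      exact ht
    have hKc : IsCompact ((fun s : ℝ => t • w + s • v) ⁻¹' C) := by
      apply Metric.isCompact_of_isClosed_isBounded (hC.isClosed.preimage hcont)
      obtain ⟨R, hR⟩ := hC.isBounded.exists_norm_le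
      rw [isBounded_iff_forall_norm_le]
      refine ⟨(R + ‖t • w‖) / ‖v‖, fun s hs => ?_⟩
      rw [le_div_iff₀ hvpos, ← norm_smul]
      have h1 := hR _ hs
      have h2 : s • v = (t • w + s • v) - t • w := by abel
      rw [h2]
      exact (norm_sub_le _ _).trans (by simpa using h1)
    have h0 : (0 : ℝ) ∈ (fun s : ℝ => t • w + s • v) ⁻¹' C := by
      simpa using interior_subset htw
    obtain ⟨s, hsC, hsmax⟩ := hKc.exists_isMaxOn ⟨0, h0⟩ continuousOn_id
    have hs0 : 0 ≤ s := hsmax h0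
    have hsint : t • w + s • v ∉ interior C := by
      intro h
      have h1 : ∀ᶠ r in nhds s, t • w + r • v ∈ interior C :=
        hcont.continuousAt.eventually (isOpen_interior.mem_nhds h)
      obtain ⟨ε, hε, h2⟩ := Metric.eventually_nhds_iff.1 h1
      have h3 := h2 (y := s + ε / 2) (by
        rw [Real.dist_eq, add_sub_cancel_left, abs_of_pos (by positivity)]; linarith)
      have h4 : s + ε / 2 ≤ s := hsmax (show t • w + (s + ε / 2) • v ∈ C from interior_subset h3)
      linarith
    refine ⟨t • w + s • v, ⟨?_, ?_⟩, ?_⟩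
    · exact ⟨subset_closure hsC, hsint⟩
    · obtain ⟨f, hf⟩ := geometric_hahn_banach_open_point hconv.interior isOpen_interior hsint
      refine ⟨(InnerProductSpace.toDual ℝ _).symm f, ?_, ?_⟩
      · rw [InnerProductSpace.toDual_symm_apply]
        have := hf _ htw
        rw [map_add, map_smul f s v, smul_eq_mul] at this
        by_contra hcon
        nlinarith
      · intro y hy
        rw [InnerProductSpace.toDual_symm_apply, map_sub, sub_nonpos]
        have hy' : y ∈ closure (interior C) := by
          rw [hconv.closure_interior_eq_closure_of_nonempty_interior ⟨_, htw⟩]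
          exact subset_closure hy
        have : closure (interior C) ⊆ {z | f z ≤ f (t • w + s • v)} :=
          closure_minimal (fun z hz => (hf z hz).le)
            (isClosed_le f.continuous continuous_const)
        exact this hy'
    · simp [inner_add_right, real_inner_smul_right, hwv, hw]
  calc (2 : ℝ≥0∞) = volume (Set.Ioo (-1 : ℝ) 1) := by
        rw [Real.volume_Ioo]; norm_num
    _ ≤ volume ((fun x : EuclideanSpace ℝ (Fin 2) => ⟪w, x⟫) '' S) := measure_mono key
    _ = μH[1] ((fun x : EuclideanSpace ℝ (Fin 2) => ⟪w, x⟫) '' S) := by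
        rw [hausdorffMeasure_real]
    _ ≤ μH[1] S := by
        simpa using hlip.hausdorffMeasure_image_le zero_le_one S
end
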